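/- For all real parameters a > 0, b > 1, T > 0: (i) G_{a,b,T}(s_n(b,T)) = 0 for every integer n ≥ 0; (ii) for every odd integer n ≥ 1, the maximum of G_{a,b,T} over [s_{n−1}(b,T), s_n(b,T)] equals a·T·b^{n−1} and is attained at χ = s_{n−1}(b,T) + (π/2)·T·b^{n−1}; (iii) for every even integer n ≥ 2, the minimum of G_{a,b,T} over [s_{n−1}(b,T), s_n(b,T)] equals −a·T·b^{n−1} and is attained at χ = s_{n−1}(b,T) + (π/2)·T·b^{n−1}. -/

import Mathlib

open Real Filter Set

/-- Breakpoints `s_n(b,T) = T·π·(b^n − 1)/(b − 1)`. -/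
noncomputable def brk (b T : ℝ) (n : ℕ) : ℝ := T * Real.pi * (b ^ n - 1) / (b - 1)

/-- Index of the segment containing `x ≥ 0`: the unique `m` with `s_m ≤ x < s_{m+1}`
(for `b > 1`, `T > 0`). -/
noncomputable def seg (b T x : ℝ) : ℕ := sInf {n : ℕ | x < brk b T (n + 1)}

/-- The saturated Nussbaum function `N_{a,b,T}`: on `[s_{n−1}, s_n)` (with `m = n − 1`)
it equals `(−1)^m·a·cos((χ − s_m)/(b^m·T))`, extended evenly to `χ < 0`. -/
noncomputable def satN (a b T : ℝ) (χ : ℝ) : ℝ :=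
  (-1 : ℝ) ^ (seg b T |χ|) * a *
    Real.cos ((|χ| - brk b T (seg b T |χ|)) / (b ^ (seg b T |χ|) * T))

/-- The integrated function `G_{a,b,T}(χ) = ∫_0^χ N_{a,b,T}(τ) dτ`. -/
noncomputable def satG (a b T : ℝ) (χ : ℝ) : ℝ := ∫ τ in (0:ℝ)..χ, satN a b T τ

/-!
On the `n`-th segment, of length `π * (b ^ n * T)`, the integrand is one half-period of a cosine.
Its integral over the whole segment therefore vanishes, so `G` is zero at every breakpoint, and
inside the segment `G` is a single arch of the sine of amplitude `a * T * b ^ n` and sign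
`(-1) ^ n`.
-/

lemma integral_cos_sub_div {w : ℝ} (hw : w ≠ 0) (c x : ℝ) :
    ∫ τ in c..x, cos ((τ - c) / w) = w * sin ((x - c) / w) := by
  rw [intervalIntegral.integral_comp_sub_right (fun y => cos (y / w)) c,
    intervalIntegral.integral_comp_div cos hw, integral_cos, sub_self, zero_div, sin_zero,
    sub_zero, smul_eq_mul]

section Nussbaum

variable {a b T x : ℝ}

lemma brk_zero (b T : ℝ) : brk b T 0 = 0 := by
  simp [brk]

lemma brk_succ (hb1 : b ≠ 1) (T : ℝ) (n : ℕ) :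
    brk b T (n + 1) = brk b T n + π * (b ^ n * T) := by
  have hb1' : b - 1 ≠ 0 := sub_ne_zero.mpr hb1
  unfold brk
  field_simp
  ring

lemma strictMono_brk (hb : 0 < b) (hb1 : b ≠ 1) (hT : 0 < T) : StrictMono (brk b T) := by
  refine strictMono_nat_of_lt_succ fun n => ?_
  rw [brk_succ hb1]
  exact lt_add_of_pos_right _ (by positivity)

lemma brk_nonneg (hb : 0 < b) (hb1 : b ≠ 1) (hT : 0 < T) (n : ℕ) : 0 ≤ brk b T n :=
  (brk_zero b T).symm.trans_le ((strictMono_brk hb hb1 hT).monotone n.zero_le)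

lemma seg_eq_of_mem_Ico (hb : 0 < b) (hb1 : b ≠ 1) (hT : 0 < T) {n : ℕ}
    (hx : x ∈ Ico (brk b T n) (brk b T (n + 1))) : seg b T x = n := by
  refine IsLeast.csInf_eq ⟨hx.2, fun m (hm : x < brk b T (m + 1)) => ?_⟩
  exact Nat.lt_succ_iff.mp ((strictMono_brk hb hb1 hT).lt_iff_lt.mp (hx.1.trans_lt hm))

lemma eqOn_satN_Ico (a : ℝ) (hb : 0 < b) (hb1 : b ≠ 1) (hT : 0 < T) (n : ℕ) :
    EqOn (satN a b T) (fun τ => (-1) ^ n * a * cos ((τ - brk b T n) / (b ^ n * T)))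
      (Ico (brk b T n) (brk b T (n + 1))) := by
  intro τ hτ
  have habs : |τ| = τ := abs_of_nonneg ((brk_nonneg hb hb1 hT n).trans hτ.1)
  simp only [satN, habs, seg_eq_of_mem_Ico hb hb1 hT hτ]

lemma uIoo_brk_subset_Ico {n : ℕ} (hx : x ∈ Icc (brk b T n) (brk b T (n + 1))) :
    uIoo (brk b T n) x ⊆ Ico (brk b T n) (brk b T (n + 1)) := by
  rw [uIoo_of_le hx.1]
  exact Ioo_subset_Ico_self.trans (Ico_subset_Ico_right hx.2)

lemma intervalIntegrable_satN_brk (a : ℝ) (hb : 0 < b) (hb1 : b ≠ 1) (hT : 0 < T) {n : ℕ}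
    (hx : x ∈ Icc (brk b T n) (brk b T (n + 1))) :
    IntervalIntegrable (satN a b T) MeasureTheory.volume (brk b T n) x := by
  have hcont : Continuous fun τ => (-1) ^ n * a * cos ((τ - brk b T n) / (b ^ n * T)) := by
    fun_prop
  exact (hcont.intervalIntegrable _ _).congr_uIoo
    ((eqOn_satN_Ico a hb hb1 hT n).symm.mono (uIoo_brk_subset_Ico hx))

lemma integral_satN_brk (a : ℝ) (hb : 0 < b) (hb1 : b ≠ 1) (hT : 0 < T) {n : ℕ}
    (hx : x ∈ Icc (brk b T n) (brk b T (n + 1))) :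
    ∫ τ in brk b T n..x, satN a b T τ =
      (-1) ^ n * (a * T * b ^ n) * sin ((x - brk b T n) / (b ^ n * T)) := by
  have hw : b ^ n * T ≠ 0 := by positivity
  rw [intervalIntegral.integral_congr_uIoo
      ((eqOn_satN_Ico a hb hb1 hT n).mono (uIoo_brk_subset_Ico hx)),
    intervalIntegral.integral_const_mul, integral_cos_sub_div hw]
  ring

lemma integral_satN_brk_succ (a : ℝ) (hb : 0 < b) (hb1 : b ≠ 1) (hT : 0 < T) (n : ℕ) :
    ∫ τ in brk b T n..brk b T (n + 1), satN a b T τ = 0 := by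
  have hw : b ^ n * T ≠ 0 := by positivity
  have hle : brk b T n ≤ brk b T (n + 1) := (strictMono_brk hb hb1 hT).monotone n.le_succ
  rw [integral_satN_brk a hb hb1 hT (right_mem_Icc.mpr hle), brk_succ hb1, add_sub_cancel_left,
    mul_div_cancel_right₀ _ hw, sin_pi, mul_zero]

lemma intervalIntegrable_satN_zero_brk (a : ℝ) (hb : 0 < b) (hb1 : b ≠ 1) (hT : 0 < T) (n : ℕ) :
    IntervalIntegrable (satN a b T) MeasureTheory.volume 0 (brk b T n) := by
  rw [← brk_zero b T]
  exact .trans_iterate fun k _ => intervalIntegrable_satN_brk a hb hb1 hT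
    (right_mem_Icc.mpr ((strictMono_brk hb hb1 hT).monotone k.le_succ))

lemma satG_eq_add_integral (a : ℝ) (hb : 0 < b) (hb1 : b ≠ 1) (hT : 0 < T) {n : ℕ}
    (hx : x ∈ Icc (brk b T n) (brk b T (n + 1))) :
    satG a b T x = satG a b T (brk b T n) + ∫ τ in brk b T n..x, satN a b T τ :=
  (intervalIntegral.integral_add_adjacent_intervals
    (intervalIntegrable_satN_zero_brk a hb hb1 hT n)
    (intervalIntegrable_satN_brk a hb hb1 hT hx)).symm

theorem satG_brk (a : ℝ) (hb : 0 < b) (hb1 : b ≠ 1) (hT : 0 < T) (n : ℕ) :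
    satG a b T (brk b T n) = 0 := by
  induction n with
  | zero => rw [brk_zero, satG, intervalIntegral.integral_same]
  | succ n ih =>
    have hle : brk b T n ≤ brk b T (n + 1) := (strictMono_brk hb hb1 hT).monotone n.le_succ
    rw [satG_eq_add_integral a hb hb1 hT (right_mem_Icc.mpr hle), ih,
      integral_satN_brk_succ a hb hb1 hT, add_zero]

theorem satG_eq_sin (a : ℝ) (hb : 0 < b) (hb1 : b ≠ 1) (hT : 0 < T) {n : ℕ}
    (hx : x ∈ Icc (brk b T n) (brk b T (n + 1))) :
    satG a b T x = (-1) ^ n * (a * T * b ^ n) * sin ((x - brk b T n) / (b ^ n * T)) := by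
  rw [satG_eq_add_integral a hb hb1 hT hx, satG_brk a hb hb1 hT, zero_add,
    integral_satN_brk a hb hb1 hT hx]

lemma abs_satG_le (ha : 0 ≤ a) (hb : 0 < b) (hb1 : b ≠ 1) (hT : 0 < T) {n : ℕ}
    (hx : x ∈ Icc (brk b T n) (brk b T (n + 1))) : |satG a b T x| ≤ a * T * b ^ n := by
  have hamp : 0 ≤ a * T * b ^ n := by positivity
  rw [satG_eq_sin a hb hb1 hT hx, abs_mul, abs_mul, abs_neg_one_pow, one_mul, abs_of_nonneg hamp]
  exact mul_le_of_le_one_right hamp (abs_sin_le_one _)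

lemma brk_midpoint_mem_Icc (hb : 0 < b) (hb1 : b ≠ 1) (hT : 0 < T) (n : ℕ) :
    brk b T n + π / 2 * T * b ^ n ∈ Icc (brk b T n) (brk b T (n + 1)) := by
  have hhalf : 0 ≤ π / 2 * T * b ^ n := by positivity
  rw [brk_succ hb1]
  constructor <;> linarith

lemma satG_midpoint (a : ℝ) (hb : 0 < b) (hb1 : b ≠ 1) (hT : 0 < T) (n : ℕ) :
    satG a b T (brk b T n + π / 2 * T * b ^ n) = (-1) ^ n * (a * T * b ^ n) := by
  have hphase : (brk b T n + π / 2 * T * b ^ n - brk b T n) / (b ^ n * T) = π / 2 := by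
    field_simp
    ring
  rw [satG_eq_sin a hb hb1 hT (brk_midpoint_mem_Icc hb hb1 hT n), hphase, sin_pi_div_two, mul_one]

lemma satG_midpoint_of_even (a : ℝ) (hb : 0 < b) (hb1 : b ≠ 1) (hT : 0 < T) {n : ℕ}
    (hn : Even n) : satG a b T (brk b T n + π / 2 * T * b ^ n) = a * T * b ^ n := by
  rw [satG_midpoint a hb hb1 hT, hn.neg_one_pow, one_mul]

lemma satG_midpoint_of_odd (a : ℝ) (hb : 0 < b) (hb1 : b ≠ 1) (hT : 0 < T) {n : ℕ}
    (hn : Odd n) : satG a b T (brk b T n + π / 2 * T * b ^ n) = -(a * T * b ^ n) := by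
  rw [satG_midpoint a hb hb1 hT, hn.neg_one_pow, neg_one_mul]

theorem isGreatest_image_satG_of_even (ha : 0 ≤ a) (hb : 0 < b) (hb1 : b ≠ 1) (hT : 0 < T)
    {n : ℕ} (hn : Even n) :
    IsGreatest (satG a b T '' Icc (brk b T n) (brk b T (n + 1))) (a * T * b ^ n) :=
  ⟨⟨_, brk_midpoint_mem_Icc hb hb1 hT n, satG_midpoint_of_even a hb hb1 hT hn⟩,
    forall_mem_image.mpr fun _ hx => le_of_abs_le (abs_satG_le ha hb hb1 hT hx)⟩

theorem isLeast_image_satG_of_odd (ha : 0 ≤ a) (hb : 0 < b) (hb1 : b ≠ 1) (hT : 0 < T)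
    {n : ℕ} (hn : Odd n) :
    IsLeast (satG a b T '' Icc (brk b T n) (brk b T (n + 1))) (-(a * T * b ^ n)) :=
  ⟨⟨_, brk_midpoint_mem_Icc hb hb1 hT n, satG_midpoint_of_odd a hb hb1 hT hn⟩,
    forall_mem_image.mpr fun _ hx => neg_le_of_abs_le (abs_satG_le ha hb hb1 hT hx)⟩

end Nussbaum

theorem satG_extrema_general (a b T : ℝ) (ha : 0 ≤ a) (hb : 0 < b) (hb1 : b ≠ 1) (hT : 0 < T) :
    (∀ n : ℕ, satG a b T (brk b T n) = 0) ∧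
    (∀ n : ℕ, Odd n →
      IsGreatest (satG a b T '' Icc (brk b T (n - 1)) (brk b T n)) (a * T * b ^ (n - 1)) ∧
      satG a b T (brk b T (n - 1) + π / 2 * T * b ^ (n - 1)) = a * T * b ^ (n - 1)) ∧
    (∀ n : ℕ, 2 ≤ n → Even n →
      IsLeast (satG a b T '' Icc (brk b T (n - 1)) (brk b T n)) (-(a * T * b ^ (n - 1))) ∧
      satG a b T (brk b T (n - 1) + π / 2 * T * b ^ (n - 1)) = -(a * T * b ^ (n - 1))) := by
  refine ⟨satG_brk a hb hb1 hT, fun n hodd => ?_, fun n hn heven => ?_⟩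
  · have hprev : Even (n - 1) := hodd.tsub_odd odd_one
    refine ⟨?_, satG_midpoint_of_even a hb hb1 hT hprev⟩
    simpa only [Nat.sub_add_cancel hodd.pos] using
      isGreatest_image_satG_of_even ha hb hb1 hT hprev
  · have hpos : 1 ≤ n := one_le_two.trans hn
    have hprev : Odd (n - 1) := Nat.Even.sub_odd hpos heven odd_one
    refine ⟨?_, satG_midpoint_of_odd a hb hb1 hT hprev⟩
    simpa only [Nat.sub_add_cancel hpos] using isLeast_image_satG_of_odd ha hb hb1 hT hprev

/-- (i) `G` vanishes at breakpoints; (ii) on odd segments its maximum is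
`a·T·b^{n−1}`, attained at the midpoint; (iii) on even segments its minimum is
`−a·T·b^{n−1}`, attained at the midpoint. -/
theorem satG_extrema (a b T : ℝ) (ha : 0 < a) (hb : 1 < b) (hT : 0 < T) :
    (∀ n : ℕ, satG a b T (brk b T n) = 0) ∧
    (∀ n : ℕ, 1 ≤ n → Odd n →
      IsGreatest (satG a b T '' Set.Icc (brk b T (n - 1)) (brk b T n)) (a * T * b ^ (n - 1)) ∧
      satG a b T (brk b T (n - 1) + (Real.pi / 2) * T * b ^ (n - 1)) = a * T * b ^ (n - 1)) ∧
    (∀ n : ℕ, 2 ≤ n → Even n →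
      IsLeast (satG a b T '' Set.Icc (brk b T (n - 1)) (brk b T n)) (-(a * T * b ^ (n - 1))) ∧
      satG a b T (brk b T (n - 1) + (Real.pi / 2) * T * b ^ (n - 1)) = -(a * T * b ^ (n - 1))) := by
  have h := satG_extrema_general a b T ha.le (one_pos.trans hb) hb.ne' hT
  exact ⟨h.1, fun n _ => h.2.1 n, h.2.2⟩
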